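/- arXiv:1412.3701 — 5 statements merged into one kernel-verified Lean document; each statement's English description precedes it below -/
import Mathlib

section
/- Delay games are monotone in the delay function: if f and f' are delay functions with f(i) ≤ f'(i) for every i, and Player I wins the delay game Γ_{f'}(L), then Player I also wins Γ_f(L). -/
namespace DelayGames

/-- A delay function: positive in every round. -/
def IsDelay (f : ℕ → ℕ) : Prop := ∀ i, 1 ≤ f i

/-- A constant delay function: `f i = 1` for all `i > 0`. -/
def IsConstant (f : ℕ → ℕ) : Prop := ∀ i, 0 < i → f i = 1

section Games

variable {I O : Type*}

/-- `α` is the ω-word obtained by concatenating the blocks `u 0, u 1, u 2, …`: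
every finite concatenation of initial blocks is a prefix of `α`. -/
def IsCat (u : ℕ → List I) (α : ℕ → I) : Prop :=
  ∀ i, ((List.range i).map u).flatten =
    (List.range (((List.range i).map u).flatten.length)).map α

/-- The blocks of Player I have the lengths prescribed by the delay function. -/
def ValidBlocks (f : ℕ → ℕ) (u : ℕ → List I) : Prop := ∀ i, (u i).length = f i

/-- The play `(u, v)` is consistent with the strategy `τ` of Player O:
in every round, `v i` is prescribed by `τ` applied to `u 0 ⋯ u i`. -/
def ConsistentO (τ : List I → O) (u : ℕ → List I) (v : ℕ → O) : Prop :=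
  ∀ i, v i = τ (((List.range (i + 1)).map u).flatten)

/-- The play `(u, v)` is consistent with the strategy `τ` of Player I:
in every round, `u i` is prescribed by `τ` applied to `v 0 ⋯ v (i-1)`. -/
def ConsistentI (τ : List O → List I) (u : ℕ → List I) (v : ℕ → O) : Prop :=
  ∀ i, u i = τ ((List.range i).map v)

/-- Player O wins the delay game `Γ_f(L)`: she has a strategy such that every
consistent play (against blocks of the prescribed lengths) has its outcome in `L`. -/
def WinsO (f : ℕ → ℕ) (L : Set (ℕ → I × O)) : Prop :=
  ∃ τ : List I → O, ∀ u v α, ValidBlocks f u → ConsistentO τ u v → IsCat u α →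
    (fun n => (α n, v n)) ∈ L

/-- Player I wins the delay game `Γ_f(L)`: he has a strategy respecting the
lengths prescribed by `f` such that no consistent play has its outcome in `L`. -/
def WinsI (f : ℕ → ℕ) (L : Set (ℕ → I × O)) : Prop :=
  ∃ τ : List O → List I, (∀ w, (τ w).length = f w.length) ∧
    ∀ u v α, ConsistentI τ u v → IsCat u α → (fun n => (α n, v n)) ∉ L

/-- Projection of a winning condition to the first components. -/
def projL (L : Set (ℕ → I × O)) : Set (ℕ → I) :=
  {α | ∃ β : ℕ → O, (fun n => (α n, β n)) ∈ L}

end Games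

/-- The prefix of length `k` of an ω-word. -/
def pre {A : Type*} (x : ℕ → A) (k : ℕ) : List A := (List.range k).map x

/-- `K · A^ω`: the ω-words having a finite prefix in `K`. -/
def extOmega {A : Type*} (K : Set (List A)) : Set (ℕ → A) := {x | ∃ k, pre x k ∈ K}

/-- Nondeterministic automata with a complete transition function. -/
structure NA (Q A : Type*) where
  init : Q
  trans : Q → A → Set Q
  accept : Set Q
  complete : ∀ q a, (trans q a).Nonempty

namespace NA

variable {Q A : Type*} (M : NA Q A)

/-- The automaton is deterministic. -/
def Deterministic : Prop := ∀ q a, ∃ q', M.trans q a = {q'}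

/-- The states reachable from a set of states after reading a finite word. -/
def reach (S : Set Q) (w : List A) : Set Q :=
  w.foldl (fun T a => ⋃ q ∈ T, M.trans q a) S

/-- The finite words accepted by `M` (runs from the initial state ending in `accept`). -/
def Lstar : Set (List A) := {w | (M.reach {M.init} w ∩ M.accept).Nonempty}

/-- `ρ` is a run of `M` on the ω-word `x`. -/
def IsRun (x : ℕ → A) (ρ : ℕ → Q) : Prop :=
  ρ 0 = M.init ∧ ∀ n, ρ (n + 1) ∈ M.trans (ρ n) (x n)

/-- Reachability acceptance: some run visits an accepting state at least once. -/
def Lexists : Set (ℕ → A) := {x | ∃ ρ, M.IsRun x ρ ∧ ∃ n, ρ n ∈ M.accept}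

/-- Safety acceptance: some run visits only accepting states. -/
def Lforall : Set (ℕ → A) := {x | ∃ ρ, M.IsRun x ρ ∧ ∀ n, ρ n ∈ M.accept}

/-- A state is productive if an accepting state is reachable from it. -/
def Productive (q : Q) : Prop := ∃ w, (M.reach {q} w ∩ M.accept).Nonempty

/-- A state lies on a cycle. -/
def OnCycle (q : Q) : Prop := ∃ w : List A, w ≠ [] ∧ q ∈ M.reach {q} w

/-- An automaton is acyclic if every state on a cycle is non-productive. -/
def Acyclic : Prop := ∀ q, M.OnCycle q → ¬ M.Productive q

/-- A state is reachable from the initial state. -/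
def ReachableState (q : Q) : Prop := ∃ w, q ∈ M.reach {M.init} w

/-- `k` is the depth of the (acyclic) automaton `M`: the length of a longest
path from the initial state to an accepting state. -/
def HasDepth (k : ℕ) : Prop :=
  (∀ w ∈ M.Lstar, w.length ≤ k) ∧ ∃ w ∈ M.Lstar, w.length = k

end NA

/-- Projection of an automaton over `I × O` to the alphabet `I`. -/
def NA.projI {Q I O : Type*} [Nonempty O] (M : NA Q (I × O)) : NA Q I where
  init := M.init
  trans q a := ⋃ b : O, M.trans q (a, b)
  accept := M.accept
  complete q a := by
    obtain ⟨b⟩ := ‹Nonempty O›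
    obtain ⟨q', hq'⟩ := M.complete q (a, b)
    exact ⟨q', Set.mem_iUnion.2 ⟨b, hq'⟩⟩

/-- Deterministic parity automata. -/
structure DPA (Q A : Type*) where
  init : Q
  trans : Q → A → Q
  color : Q → ℕ

/-- The maximal value occurring infinitely often in the sequence `c` exists
and is even. -/
def MaxEvenInf (c : ℕ → ℕ) : Prop :=
  ∃ k, Even k ∧ {n | c n = k}.Infinite ∧ ∀ k', {n | c n = k'}.Infinite → k' ≤ k

/-- Deterministic finite automata (acceptors for finite words). -/
structure DFAcc (S A : Type*) where
  init : S
  trans : S → A → S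
  accept : Set S

/-- The language of finite words accepted by a DFA. -/
def DFAcc.lang {S A : Type*} (D : DFAcc S A) : Set (List A) :=
  {w | w.foldl D.trans D.init ∈ D.accept}

namespace DPA

variable {Q A : Type*} (M : DPA Q A)

/-- The unique run of a deterministic automaton on an ω-word. -/
def run (x : ℕ → A) : ℕ → Q
  | 0 => M.init
  | n + 1 => M.trans (run x n) (x n)

/-- The parity language of `M`: the maximal color visited infinitely often is even. -/
def Lparity : Set (ℕ → A) := {x | MaxEvenInf fun n => M.color (M.run x n)}

/-- The number of colors of `M`. -/
def numColors [Fintype Q] : ℕ := (Finset.image M.color Finset.univ).card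

end DPA

namespace DPA

variable {Q I O : Type*} (M : DPA Q (I × O))

/-- The transition function of the color-tracking automaton `𝒞`. -/
def transC (qc : Q × ℕ) (x : I × O) : Q × ℕ :=
  (M.trans qc.1 x, max qc.2 (M.color (M.trans qc.1 x)))

/-- The initial state of the color-tracking automaton `𝒞`. -/
def initC : Q × ℕ := (M.init, M.color M.init)

/-- The valid states of `𝒞`, i.e. `Q × Ω(Q)`. -/
def QCvalid : Set (Q × ℕ) := {qc | qc.2 ∈ Set.range M.color}

/-- One step of the powerset automaton of the projection of `𝒞`. -/
def transP (S : Set (Q × ℕ)) (a : I) : Set (Q × ℕ) :=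
  ⋃ s ∈ S, ⋃ b : O, {M.transC s (a, b)}

/-- Iterated powerset transitions `δ_P^*`. -/
def transPStar (S : Set (Q × ℕ)) (w : List I) : Set (Q × ℕ) :=
  w.foldl M.transP S

/-- The domain of a partial function, represented via `Option`. -/
def rdom {Q : Type*} (r : (Q × ℕ) → Option (Set (Q × ℕ))) : Set (Q × ℕ) :=
  {qc | r qc ≠ none}

open scoped Classical in
/-- The partial function `r_w^D` with domain `D`. -/
noncomputable def rOf (D : Set (Q × ℕ)) (w : List I) :
    (Q × ℕ) → Option (Set (Q × ℕ)) :=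
  fun qc =>
    if qc ∈ D then some (M.transPStar ({(qc.1, M.color qc.1)} : Set (Q × ℕ)) w)
    else none

/-- The set `W_r` of witnesses of a partial function `r`. -/
def WitnessSet (r : (Q × ℕ) → Option (Set (Q × ℕ))) : Set (List I) :=
  {w | r = M.rOf (rdom r) w}

/-- The set `𝔉` of partial functions with nonempty domain and infinitely many
witnesses. -/
def Frak : Set ((Q × ℕ) → Option (Set (Q × ℕ))) :=
  {r | (rdom r).Nonempty ∧ (M.WitnessSet r).Infinite}

end DPA

end DelayGames

/-!
Player I buffers the letters of a winning strategy `τ` for `Γ_{f'}(L)`. When he has to move in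
`Γ_f(L)` after a history `w`, he simulates `τ` on all prefixes of `w` and plays the next `f |w|`
simulated letters; enough of them are available, since by then `τ` has produced at least as many
letters as `f` has requested. What he has played is always a prefix of what `τ` has produced, and
its length is unbounded, so both sequences of blocks define the same ω-word: the play has the same
outcome as the play of `Γ_{f'}(L)` in which `τ` meets the same answers of Player O.
-/

namespace DelayGames

section Words

variable {A : Type*}

lemma pre_succ (x : ℕ → A) (n : ℕ) : pre x (n + 1) = pre x n ++ [x n] := by
  simp [pre, List.range_succ]

@[simp]
lemma length_pre (x : ℕ → A) (n : ℕ) : (pre x n).length = n := by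
  simp [pre]

lemma eq_pre_of_prefix_pre {x : ℕ → A} {w : List A} {n : ℕ} (h : w <+: pre x n) :
    w = pre x w.length := by
  have hn : w.length ≤ n := by simpa using h.length_le
  calc
    w = (pre x n).take w.length := List.prefix_iff_eq_take.mp h
    _ = pre x w.length := by simp [pre, ← List.map_take, List.take_range, hn]

lemma inits_concat (w : List A) (a : A) : (w ++ [a]).inits = w.inits ++ [w ++ [a]] := by
  simp [List.inits_append]

lemma inits_pre (x : ℕ → A) (n : ℕ) : (pre x n).inits = pre (pre x) (n + 1) := by
  induction n with
  | zero => rfl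
  | succ n ih => rw [pre_succ x, inits_concat, ih, pre_succ _ (n + 1), pre_succ x]

lemma flatten_pre_succ (u : ℕ → List A) (n : ℕ) :
    (pre u (n + 1)).flatten = (pre u n).flatten ++ u n := by
  simp [pre_succ]

lemma flatten_pre_prefix (u : ℕ → List A) {m n : ℕ} (h : m ≤ n) :
    (pre u m).flatten <+: (pre u n).flatten := by
  induction n, h using Nat.le_induction with
  | base => exact List.prefix_rfl
  | succ n _ ih =>
    rw [flatten_pre_succ]
    exact ih.trans (List.prefix_append _ _)

lemma ValidBlocks.length_flatten_pre {f : ℕ → ℕ} {u : ℕ → List A} (hu : ValidBlocks f u) (n : ℕ) :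
    (pre u n).flatten.length = ∑ i ∈ Finset.range n, f i := by
  induction n with
  | zero => rfl
  | succ n ih => rw [flatten_pre_succ, List.length_append, ih, hu n, Finset.sum_range_succ]

lemma IsCat.of_prefix {u u' : ℕ → List A} {α : ℕ → A} (h : IsCat u α)
    (hprefix : ∀ n, (pre u n).flatten <+: (pre u' n).flatten)
    (hlength : Filter.Tendsto (fun n => (pre u n).flatten.length) Filter.atTop Filter.atTop) :
    IsCat u' α := by
  intro m
  obtain ⟨n, hmn, hlen⟩ := ((Filter.eventually_ge_atTop m).and
    (hlength.eventually_ge_atTop (pre u' m).flatten.length)).exists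
  have hpre : (pre u' m).flatten <+: (pre u n).flatten :=
    List.prefix_of_prefix_length_le (flatten_pre_prefix u' hmn) (hprefix n) hlen
  have hα : (pre u n).flatten = pre α (pre u n).flatten.length := h n
  exact eq_pre_of_prefix_pre (hα ▸ hpre)

end Words

lemma IsDelay.le_sum_range {f : ℕ → ℕ} (hf : IsDelay f) (n : ℕ) :
    n ≤ ∑ i ∈ Finset.range n, f i := by
  simpa using Finset.card_nsmul_le_sum (Finset.range n) f 1 fun i _ => hf i

section Buffering

variable {I O : Type*} {f f' : ℕ → ℕ} {τ : List O → List I} {u u' : ℕ → List I} {v : ℕ → O}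

lemma ConsistentI.validBlocks (hu : ConsistentI τ u v) (hτ : ∀ w, (τ w).length = f w.length) :
    ValidBlocks f u := fun i => by
  rw [hu i, hτ, List.length_map, List.length_range]

/-- The strategy for Player I with delay function `f` that buffers the letters produced by the
strategy `τ`. After the history `w` the buffer is the concatenation of the blocks `τ w'` for the
prefixes `w'` of `w`; its first `f 0 + ⋯ + f (|w| - 1)` letters have already been played. -/
def bufferedStrategy (f : ℕ → ℕ) (τ : List O → List I) (w : List O) : List I :=
  ((w.inits.flatMap τ).take (∑ i ∈ Finset.range (w.length + 1), f i)).drop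
    (∑ i ∈ Finset.range w.length, f i)

lemma length_flatMap_inits (hτ : ∀ w, (τ w).length = f w.length) (w : List O) :
    (w.inits.flatMap τ).length = ∑ i ∈ Finset.range (w.length + 1), f i := by
  induction w using List.reverseRecOn with
  | nil => simp [hτ]
  | append_singleton w a ih =>
    rw [inits_concat, List.flatMap_append, List.length_append, ih, List.length_append,
      List.length_singleton, Finset.sum_range_succ _ (w.length + 1)]
    simp [hτ]

lemma length_bufferedStrategy
    (hle : ∀ n, ∑ i ∈ Finset.range n, f i ≤ ∑ i ∈ Finset.range n, f' i)
    (hτ : ∀ w, (τ w).length = f' w.length) (w : List O) :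
    (bufferedStrategy f τ w).length = f w.length := by
  rw [bufferedStrategy, List.length_drop, List.length_take, length_flatMap_inits hτ,
    min_eq_left (hle _), Finset.sum_range_succ, Nat.add_sub_cancel_left]

lemma ConsistentI.bufferedStrategy_pre (hu' : ConsistentI τ u' v) (f : ℕ → ℕ) (n : ℕ) :
    bufferedStrategy f τ (pre v n) =
      ((pre u' (n + 1)).flatten.take (∑ i ∈ Finset.range (n + 1), f i)).drop
        (∑ i ∈ Finset.range n, f i) := by
  have hblocks : u' = fun i => τ (pre v i) := funext hu'
  have hbuffer : (pre v n).inits.flatMap τ = (pre u' (n + 1)).flatten := by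
    rw [inits_pre, List.flatMap_def, pre, List.map_map, hblocks]
    rfl
  rw [bufferedStrategy, hbuffer, length_pre]

lemma ConsistentI.flatten_pre_eq_take (hu : ConsistentI (bufferedStrategy f τ) u v)
    (hu' : ConsistentI τ u' v)
    (hle : ∀ n, ∑ i ∈ Finset.range n, f i ≤ (pre u' n).flatten.length) (n : ℕ) :
    (pre u n).flatten = (pre u' n).flatten.take (∑ i ∈ Finset.range n, f i) := by
  induction n with
  | zero => rfl
  | succ n ih =>
    set s := ∑ i ∈ Finset.range n, f i
    set t := ∑ i ∈ Finset.range (n + 1), f i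
    have hst : s ≤ t := Finset.sum_le_sum_of_subset (by simp)
    have hplayed : (pre u n).flatten = ((pre u' (n + 1)).flatten.take t).take s := by
      rw [ih, flatten_pre_succ, List.take_take, min_eq_left hst,
        List.take_append_of_le_length (hle n)]
    have hblock : u n = ((pre u' (n + 1)).flatten.take t).drop s :=
      (hu n).trans (hu'.bufferedStrategy_pre f n)
    rw [flatten_pre_succ, hplayed, hblock, List.take_append_drop]

lemma ConsistentI.isCat_of_bufferedStrategy {α : ℕ → I}
    (hu : ConsistentI (bufferedStrategy f τ) u v) (hu' : ConsistentI τ u' v) (hf : IsDelay f)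
    (hle : ∀ n, ∑ i ∈ Finset.range n, f i ≤ ∑ i ∈ Finset.range n, f' i)
    (hτ : ∀ w, (τ w).length = f' w.length) (hα : IsCat u α) : IsCat u' α := by
  have hlength (n : ℕ) : (pre u n).flatten.length = ∑ i ∈ Finset.range n, f i :=
    (hu.validBlocks (length_bufferedStrategy hle hτ)).length_flatten_pre n
  have hlength' (n : ℕ) : (pre u' n).flatten.length = ∑ i ∈ Finset.range n, f' i :=
    (hu'.validBlocks hτ).length_flatten_pre n
  refine hα.of_prefix (fun n => ?_) (Filter.tendsto_atTop_mono (fun n => ?_) Filter.tendsto_id)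
  · rw [hu.flatten_pre_eq_take hu' (fun k => (hle k).trans_eq (hlength' k).symm) n]
    exact List.take_prefix _ _
  · exact (hf.le_sum_range n).trans_eq (hlength n).symm

end Buffering

theorem stmt1_general {I O : Type*} (L : Set (ℕ → I × O)) (f f' : ℕ → ℕ) (hf : IsDelay f)
    (hle : ∀ n, ∑ i ∈ Finset.range n, f i ≤ ∑ i ∈ Finset.range n, f' i) (h : WinsI f' L) :
    WinsI f L := by
  obtain ⟨τ, hτ, hwin⟩ := h
  refine ⟨bufferedStrategy f τ, length_bufferedStrategy hle hτ, fun u v α hu hα => ?_⟩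
  have hu' : ConsistentI τ (fun i => τ (pre v i)) v := fun _ => rfl
  exact hwin _ v α hu' (hu.isCat_of_bufferedStrategy hu' hf hle hτ hα)

/-- Delay games are monotone in the delay function: if `f ≤ f'`
pointwise and Player I wins `Γ_{f'}(L)`, then Player I wins `Γ_f(L)`. -/
theorem stmt1 {I O : Type*} [Fintype I] [Fintype O] [Nonempty I] [Nonempty O]
    (L : Set (ℕ → I × O)) (f f' : ℕ → ℕ) (hf : IsDelay f) (hf' : IsDelay f')
    (hle : ∀ i, f i ≤ f' i) (h : WinsI f' L) :
    WinsI f L :=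
  stmt1_general L f f' hf (fun _ => Finset.sum_le_sum fun i _ => hle i) h

end DelayGames
end

section
/- Let n ≥ 1 and let w be a finite word over the alphabet {1,…,n} that contains no bad j-pair for any j ∈ {1,…,n}. If w is nonempty and m is the maximal letter occurring in w, then |w| < 2^m; in particular, |w| < 2^n. -/
namespace DelayGames

/-- The finite word `w` over `{1, …, n} ⊆ ℕ` contains a bad `j`-pair: two
occurrences of `j` such that no letter `j' > j` occurs in between. -/
def HasBadPair (w : List ℕ) (j : ℕ) : Prop :=
  ∃ i₁ i₂, i₁ < i₂ ∧ i₂ < w.length ∧ w.getD i₁ 0 = j ∧ w.getD i₂ 0 = j ∧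
    ∀ i, i₁ < i → i < i₂ → w.getD i 0 ≤ j

section

variable {α : Type*} [Preorder α] {v w : List α}

/-- Words without bad pairs, over any preordered alphabet: between two occurrences of a letter there
is a larger one. The pair is given by the factor `j u j` rather than by positions (as in
`HasBadPair`), so that the notion passes to factors of `w` at once. -/
def BadPairFree (w : List α) : Prop :=
  ∀ (j : α) (u : List α), j :: u ++ [j] <:+: w → ∃ x ∈ u, j < x

namespace BadPairFree

theorem of_isInfix (hw : BadPairFree w) (h : v <:+: w) : BadPairFree v :=
  fun j u hju => hw j u (hju.trans h)

theorem exists_eq_append_cons (hw : BadPairFree w) {m : α} (hm : m ∈ w)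
    (hmax : ∀ x ∈ w, ¬ m < x) : ∃ u v, w = u ++ m :: v ∧ m ∉ u ∧ m ∉ v := by
  obtain ⟨u, v, rfl, hmu⟩ := List.eq_append_cons_of_mem hm
  refine ⟨u, v, rfl, hmu, fun hmv => ?_⟩
  obtain ⟨s, t, rfl⟩ := List.append_of_mem hmv
  obtain ⟨x, hxs, hmx⟩ := hw m s ⟨u, t, by simp⟩
  exact hmax x (by simp [hxs]) hmx

end BadPairFree

end

theorem hasBadPair_of_isInfix {w u : List ℕ} {j : ℕ} (h : j :: u ++ [j] <:+: w)
    (hu : ∀ x ∈ u, x ≤ j) : HasBadPair w j := by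
  obtain ⟨s, t, rfl⟩ := h
  refine ⟨s.length, s.length + (u.length + 1), by lia, by simp, by simp, by simp,
    fun i hsi hiu => ?_⟩
  obtain ⟨k, rfl⟩ := Nat.exists_eq_add_of_lt hsi
  have hk : k < u.length := by lia
  simpa [Nat.add_assoc, List.getElem?_append, hk] using hu u[k] (List.getElem_mem hk)

theorem badPairFree_of_forall_not_hasBadPair {w : List ℕ} (h : ∀ j ∈ w, ¬ HasBadPair w j) :
    BadPairFree w := by
  intro j u hju
  by_contra! hu
  exact h j (hju.subset (by simp)) (hasBadPair_of_isInfix hju hu)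

theorem stmt2_general {α : Type*} [Preorder α] [DecidableEq α] {w : List α}
    (hw : BadPairFree w) : w.length < 2 ^ w.toFinset.card := by
  induction hs : w.toFinset using Finset.strongInduction generalizing w with | H s ih
  subst hs
  obtain rfl | hne := eq_or_ne w []
  · simp
  obtain ⟨m, hm⟩ := w.toFinset.exists_maximal (w.toFinset_nonempty_iff.mpr hne)
  obtain ⟨u, v, huv, hmu, hmv⟩ := hw.exists_eq_append_cons (List.mem_toFinset.mp hm.prop)
    fun x hx => hm.not_gt (List.mem_toFinset.mpr hx)
  set d := (w.toFinset.erase m).card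
  have hfactor {x : List α} (hxw : x <:+: w) (hmx : m ∉ x) : x.length < 2 ^ d := by
    have hsub : x.toFinset ⊆ w.toFinset.erase m := by
      have hletters : x.toFinset ⊆ w.toFinset := fun y => by simpa using fun hy => hxw.subset hy
      exact Finset.subset_erase.mpr ⟨hletters, by simpa using hmx⟩
    have hssub : x.toFinset ⊂ w.toFinset := hsub.trans_ssubset (Finset.erase_ssubset hm.prop)
    exact (ih _ hssub (hw.of_isInfix hxw) rfl).trans_le
      (Nat.pow_le_pow_right two_pos (Finset.card_le_card hsub))
  have hu : u.length < 2 ^ d := hfactor ⟨[], m :: v, by simp [huv]⟩ hmu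
  have hv : v.length < 2 ^ d := hfactor ⟨u ++ [m], [], by simp [huv]⟩ hmv
  calc w.length = u.length + v.length + 1 := by simp [huv, Nat.add_assoc]
    _ < 2 ^ d + 2 ^ d := by lia
    _ = 2 ^ w.toFinset.card := by
      rw [← Finset.card_erase_add_one hm.prop, pow_succ, mul_two]

theorem BadPairFree.length_lt_two_pow {w : List ℕ} (hw : BadPairFree w) {k : ℕ}
    (hk : ∀ x ∈ w, 1 ≤ x ∧ x ≤ k) : w.length < 2 ^ k := by
  have hsub : w.toFinset ⊆ Finset.Icc 1 k := fun x hx =>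
    Finset.mem_Icc.mpr (hk x (List.mem_toFinset.mp hx))
  calc w.length < 2 ^ w.toFinset.card := stmt2_general hw
    _ ≤ 2 ^ k := Nat.pow_le_pow_right two_pos (by simpa using Finset.card_le_card hsub)

/-- if a nonempty word over `{1, …, n}` contains no bad `j`-pair
for any `j ∈ {1, …, n}` and `m` is its maximal letter, then `|w| < 2^m`, and
in particular `|w| < 2^n`. -/
theorem stmt2 (n : ℕ) (hn : 1 ≤ n) (w : List ℕ)
    (hw : ∀ x ∈ w, 1 ≤ x ∧ x ≤ n)
    (hbad : ∀ j, 1 ≤ j → j ≤ n → ¬ HasBadPair w j)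
    (hne : w ≠ []) (m : ℕ) (hm : m ∈ w) (hmax : ∀ x ∈ w, x ≤ m) :
    w.length < 2 ^ m ∧ w.length < 2 ^ n := by
  have hfree := badPairFree_of_forall_not_hasBadPair fun j hj => hbad j (hw j hj).1 (hw j hj).2
  exact ⟨hfree.length_lt_two_pow fun x hx => ⟨(hw x hx).1, hmax x hx⟩, hfree.length_lt_two_pow hw⟩

end DelayGames
end

section
/- For every n > 1 let Σ_I = Σ_O = {1,…,n} and let L_n ⊆ (Σ_I × Σ_O)^ω be defined by: (α(0),β(0))(α(1),β(1))(α(2),β(2))⋯ ∈ L_n iff the word α(1)α(2)α(3)⋯ contains a bad β(0)-pair. Then (i) there is a constant c such that for every n > 1, L_n = L_∃(A_n) for a deterministic reachability automaton A_n with at most c·n states; (ii) Player O wins Γ_f(L_n) for every constant delay function f with f(0) > 2^n; and (iii) Player I wins Γ_f(L_n) for every delay function f with f(0) ≤ 2^n. -/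
namespace DelayGames

/-- The ω-word `α` over `{1, …, n}` (represented by `Fin n`) contains a bad
`j`-pair: two occurrences of `j` with no larger letter in between. -/
def HasBadPairOmega {n : ℕ} (α : ℕ → Fin n) (j : Fin n) : Prop :=
  ∃ i₁ i₂, i₁ < i₂ ∧ α i₁ = j ∧ α i₂ = j ∧ ∀ i, i₁ < i → i < i₂ → α i ≤ j

/-- The winning condition `L_n`: the word `α(1)α(2)α(3)⋯` contains a bad
`β(0)`-pair. -/
def Lbad (n : ℕ) : Set (ℕ → Fin n × Fin n) :=
  {x | HasBadPairOmega (fun k => (x (k + 1)).1) (x 0).2}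

section Pending

variable {A B : Type*}

/-- The letter `j` is pending at position `k` of `x`: it occurs before `k` and has not been followed
by a larger letter since, so that another `j` at position `k` completes a bad `j`-pair. -/
def IsPending [LE A] (x : ℕ → A) (j : A) (k : ℕ) : Prop :=
  ∃ i < k, x i = j ∧ ∀ l, i < l → l < k → x l ≤ j

theorem hasBadPairOmega_iff {n : ℕ} {x : ℕ → Fin n} {j : Fin n} :
    HasBadPairOmega x j ↔ ∃ k, x k = j ∧ IsPending x j k :=
  ⟨fun ⟨i, k, hik, hi, hk, hle⟩ => ⟨k, hk, i, hik, hi, hle⟩,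
    fun ⟨k, hk, i, hik, hi, hle⟩ => ⟨i, k, hik, hi, hk, hle⟩⟩

theorem not_isPending_zero [LE A] (x : ℕ → A) (j : A) : ¬ IsPending x j 0 :=
  fun ⟨_, hi, _⟩ => Nat.not_lt_zero _ hi

theorem isPending_succ [LE A] {x : ℕ → A} {j : A} {k : ℕ} :
    IsPending x j (k + 1) ↔ x k = j ∨ IsPending x j k ∧ x k ≤ j := by
  constructor
  · rintro ⟨i, hik, hi, hle⟩
    obtain rfl | hlt := (Nat.lt_succ_iff.1 hik).eq_or_lt
    · exact .inl hi
    · exact .inr ⟨⟨i, hlt, hi, fun l hil hlk => hle l hil (by omega)⟩, hle k hlt k.lt_succ_self⟩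
  · rintro (hk | ⟨⟨i, hik, hi, hle⟩, hk⟩)
    · exact ⟨k, k.lt_succ_self, hk, fun l hkl hlk => by omega⟩
    · refine ⟨i, by omega, hi, fun l hil hlk => ?_⟩
      obtain rfl | hlt := (Nat.lt_succ_iff.1 hlk).eq_or_lt
      exacts [hk, hle l hil hlt]

theorem IsPending.map [Preorder A] [Preorder B] {g : A → B} (hg : Monotone g) {x : ℕ → A}
    {y : ℕ → B} {j : A} {k : ℕ} (hxy : ∀ l < k, y l = g (x l)) (h : IsPending x j k) :
    IsPending y (g j) k := by
  obtain ⟨i, hik, rfl, hle⟩ := h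
  exact ⟨i, hik, hxy i hik, fun l hil hlk => hxy l hlk ▸ hg (hle l hil hlk)⟩

theorem IsPending.of_shift [LE A] {x : ℕ → A} {j : A} {a k : ℕ}
    (h : IsPending (fun l => x (a + l)) j k) : IsPending x j (a + k) := by
  obtain ⟨i, hik, hi, hle⟩ := h
  refine ⟨a + i, by omega, hi, fun l hil hlk => ?_⟩
  obtain ⟨l, rfl⟩ := Nat.exists_eq_add_of_le (show a ≤ l by omega)
  exact hle l (by omega) (by omega)

theorem exists_isPending_of_forall_mem [LinearOrder A] (s : Finset A) :
    ∀ x : ℕ → A, (∀ i < 2 ^ s.card, x i ∈ s) → ∃ k < 2 ^ s.card, IsPending x (x k) k := by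
  induction s using Finset.induction_on_max with
  | empty => intro x hx; simpa using hx 0
  | insert a s ha ih =>
    intro x hx
    rw [Finset.card_insert_of_notMem fun h => (ha a h).false, pow_succ] at hx ⊢
    have mem_of_ne {i : ℕ} (hi : i < 2 ^ s.card * 2) (hne : x i ≠ a) : x i ∈ s :=
      Finset.mem_of_mem_insert_of_ne (hx i hi) hne
    by_cases hfirst : ∃ p < 2 ^ s.card, x p = a
    · by_cases hsecond : ∃ q < 2 ^ s.card, x (2 ^ s.card + q) = a
      · obtain ⟨p, hp, hxp⟩ := hfirst
        obtain ⟨q, hq, hxq⟩ := hsecond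
        refine ⟨2 ^ s.card + q, by omega, p, by omega, hxp.trans hxq.symm, fun l _ hl => ?_⟩
        rw [hxq]
        exact (Finset.mem_insert.1 (hx l (by omega))).elim le_of_eq fun h => (ha _ h).le
      · push Not at hsecond
        obtain ⟨k, hk, hpend⟩ := ih (fun l => x (2 ^ s.card + l)) fun i hi =>
          mem_of_ne (by omega) (hsecond i hi)
        exact ⟨2 ^ s.card + k, by omega, hpend.of_shift⟩
    · push Not at hfirst
      obtain ⟨k, hk, hpend⟩ := ih x fun i hi => mem_of_ne (by omega) (hfirst i hi)
      exact ⟨k, by omega, hpend⟩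

end Pending

section Ruler

theorem padicValNat_two_lt_of_lt_two_pow {k n : ℕ} (hk : k ≠ 0) (hkn : k < 2 ^ n) :
    padicValNat 2 k < n :=
  (padicValNat_le_nat_log k).trans_lt (Nat.log_lt_of_lt_pow hk hkn)

theorem padicValNat_two_lt_add_two_pow {a : ℕ} (ha : a ≠ 0) :
    padicValNat 2 a < padicValNat 2 (a + 2 ^ padicValNat 2 a) := by
  set j := padicValNat 2 a with hj
  obtain ⟨q, hq⟩ : 2 ^ j ∣ a := pow_padicValNat_dvd
  have hodd : ¬ 2 ∣ q := fun h => pow_succ_padicValNat_not_dvd (p := 2) ha <| by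
    rw [← hj, hq, pow_succ]
    exact Nat.mul_dvd_mul_left _ h
  have hdvd : 2 ^ (j + 1) ∣ a + 2 ^ j := by
    rw [hq, ← Nat.mul_succ, pow_succ]
    exact Nat.mul_dvd_mul_left _ (by omega)
  exact (padicValNat_dvd_iff_le (by omega)).1 hdvd

theorem add_two_pow_padicValNat_lt {a b : ℕ} (ha : a ≠ 0) (hab : a < b)
    (h : padicValNat 2 a = padicValNat 2 b) : a + 2 ^ padicValNat 2 a < b := by
  have hdvd : 2 ^ padicValNat 2 a ∣ b - a :=
    Nat.dvd_sub (h ▸ pow_padicValNat_dvd) pow_padicValNat_dvd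
  have hle : 2 ^ padicValNat 2 a ≤ b - a := Nat.le_of_dvd (by omega) hdvd
  have hne : a + 2 ^ padicValNat 2 a ≠ b := fun hb =>
    (padicValNat_two_lt_add_two_pow ha).ne (hb ▸ h)
  omega

theorem not_isPending_padicValNat_two (k : ℕ) :
    ¬ IsPending (fun l => padicValNat 2 (l + 1)) (padicValNat 2 (k + 1)) k := by
  rintro ⟨i, hik, hi, hle⟩
  dsimp only at hi hle
  have hgt := padicValNat_two_lt_add_two_pow (Nat.add_one_ne_zero i)
  have hlt := add_two_pow_padicValNat_lt (Nat.add_one_ne_zero i) (by omega) hi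
  have hpos : 0 < 2 ^ padicValNat 2 (i + 1) := by positivity
  refine hgt.not_ge ?_
  rw [Nat.add_right_comm, hi]
  rw [hi] at hlt hpos
  exact hle _ (by omega) (by omega)

end Ruler

section Games

variable {I O : Type*} {u : ℕ → List I} {α : ℕ → I}

theorem pre_eq_pre_iff {x y : ℕ → I} {k : ℕ} :
    pre x k = pre y k ↔ ∀ i < k, x i = y i := by
  simp [pre]

namespace IsCat

theorem pre_eq_head (h : IsCat u α) : pre α (u 0).length = u 0 := by
  simpa [pre] using (h 1).symm

theorem tail (h : IsCat u α) : IsCat (fun i => u (i + 1)) fun k => α ((u 0).length + k) := by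
  intro i
  have hi := h (i + 1)
  simp only [List.range_succ_eq_map, List.map_cons, List.map_map, List.flatten_cons,
    List.length_append, List.range_add, List.map_append] at hi
  exact List.append_inj_right hi (by simp)

theorem exists_mem_block (h : IsCat u α) (hne : ∀ i, u i ≠ []) (p : ℕ) : ∃ i, α p ∈ u i := by
  have hlen : p < (((List.range (p + 1)).map u).flatten).length := by
    rw [List.length_flatten]
    refine Nat.lt_of_succ_le (le_trans ?_ (List.length_le_sum_of_one_le _ ?_))
    · simp
    · simpa [Nat.one_le_iff_ne_zero] using fun i _ => hne i
  have hmem : α p ∈ ((List.range (p + 1)).map u).flatten := by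
    rw [h (p + 1)]
    exact List.mem_map_of_mem (List.mem_range.2 hlen)
  obtain ⟨_, hl, hp⟩ := List.mem_flatten.1 hmem
  obtain ⟨i, -, rfl⟩ := List.mem_map.1 hl
  exact ⟨i, hp⟩

end IsCat

theorem winsO_of_forall_exists_first_letter [Nonempty O] {f : ℕ → ℕ} {L : Set (ℕ → I × O)}
    (h : ∀ α : ℕ → I, ∃ b, ∀ (α' : ℕ → I) (β : ℕ → O), (∀ p < f 0, α' p = α p) → β 0 = b →
      (fun k => (α' k, β k)) ∈ L) : WinsO f L := by
  have hblock : ∀ w : List I, ∃ b, ∀ (α : ℕ → I) (β : ℕ → O), pre α (f 0) = w → β 0 = b →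
      (fun k => (α k, β k)) ∈ L := by
    intro w
    by_cases hw : ∃ α : ℕ → I, pre α (f 0) = w
    · obtain ⟨α, rfl⟩ := hw
      obtain ⟨b, hb⟩ := h α
      exact ⟨b, fun α' β hα' => hb α' β (pre_eq_pre_iff.1 hα')⟩
    · exact ⟨Classical.arbitrary O, fun α β hα => absurd ⟨α, hα⟩ hw⟩
  choose τ hτ using hblock
  refine ⟨τ, fun u v α hu hv hα => hτ (u 0) α v ?_ ?_⟩
  · rw [← hu 0, hα.pre_eq_head]
  · simpa using hv 0

/-- The strategy of Player I in a game with delay function `f` that opens with a prefix of `w` and,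
once Player O has chosen `b` in round `0`, repeats the letter `g b` forever. -/
def openThenRepeat (f : ℕ → ℕ) (w : ℕ → I) (g : O → I) : List O → List I
  | [] => pre w (f 0)
  | b :: v => List.replicate (f (v.length + 1)) (g b)

theorem length_openThenRepeat (f : ℕ → ℕ) (w : ℕ → I) (g : O → I) (v : List O) :
    (openThenRepeat f w g v).length = f v.length := by
  cases v <;> simp [openThenRepeat, pre]

theorem winsI_of_open_then_repeat {f : ℕ → ℕ} (hf : IsDelay f) {L : Set (ℕ → I × O)}
    (w : ℕ → I) (g : O → I)
    (h : ∀ (α : ℕ → I) (β : ℕ → O), (∀ p < f 0, α p = w p) → (∀ p, f 0 ≤ p → α p = g (β 0)) →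
      (fun k => (α k, β k)) ∉ L) : WinsI f L := by
  refine ⟨openThenRepeat f w g, length_openThenRepeat f w g, fun u v α hu hα => ?_⟩
  have hhead : u 0 = pre w (f 0) := hu 0
  have hlen : (u 0).length = f 0 := by simp [hhead, pre]
  have hrest (i : ℕ) : u (i + 1) = List.replicate (f (i + 1)) (g (v 0)) := by
    simp [hu (i + 1), List.range_succ_eq_map, openThenRepeat]
  have hne (i : ℕ) : u (i + 1) ≠ [] := by
    simpa [hrest] using Nat.one_le_iff_ne_zero.1 (hf (i + 1))
  refine h α v (pre_eq_pre_iff.1 ?_) fun p hp => ?_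
  · rw [← hhead, ← hlen, hα.pre_eq_head]
  · obtain ⟨k, rfl⟩ := Nat.exists_eq_add_of_le hp
    obtain ⟨i, hi⟩ := hα.tail.exists_mem_block hne k
    rw [hlen, hrest i] at hi
    exact List.eq_of_mem_replicate hi

end Games

theorem winsO_Lbad {n : ℕ} [NeZero n] {f : ℕ → ℕ} (hf : 2 ^ n < f 0) : WinsO f (Lbad n) := by
  refine winsO_of_forall_exists_first_letter fun α => ?_
  obtain ⟨k, hk, hpend⟩ := exists_isPending_of_forall_mem Finset.univ (fun l => α (l + 1))
    fun _ _ => Finset.mem_univ _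
  rw [Finset.card_fin] at hk
  refine ⟨α (k + 1), fun α' β hα' hβ => hasBadPairOmega_iff.2 ⟨k, ?_, ?_⟩⟩
  · exact (hα' _ (by omega)).trans hβ.symm
  · dsimp only
    rw [hβ]
    exact hpend.map monotone_id fun l hl => hα' _ (by omega)

theorem winsI_Lbad {n : ℕ} (hn : 1 < n) {f : ℕ → ℕ} (hf : IsDelay f) (hf0 : f 0 ≤ 2 ^ n) :
    WinsI f (Lbad n) := by
  have : NeZero n := ⟨by omega⟩
  have : Nontrivial (Fin n) := Fin.nontrivial_iff_two_le.2 hn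
  choose other hother using fun b : Fin n => exists_ne b
  refine winsI_of_open_then_repeat hf (fun k => Fin.ofNat n (padicValNat 2 k)) other
    fun α β hopen hrepeat hbad => ?_
  obtain ⟨k, hk, hpend⟩ := hasBadPairOmega_iff.1 hbad
  dsimp only at hk hpend
  have hkf : k + 1 < f 0 := by
    by_contra! hle
    exact hother (β 0) (hrepeat _ hle ▸ hk)
  have hval {l : ℕ} (hl : l ≤ k) : padicValNat 2 (l + 1) = (α (l + 1) : ℕ) := by
    rw [hopen _ (by omega), Fin.val_ofNat, Nat.mod_eq_of_lt]
    exact padicValNat_two_lt_of_lt_two_pow l.succ_ne_zero (by omega)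
  refine not_isPending_padicValNat_two k ?_
  rw [hval le_rfl, hk]
  exact hpend.map Fin.val_strictMono.monotone fun l hl => hval hl.le

section Automaton

variable {A : Type*} [LE A]

/-- The transition map of `pairAutomaton`. In a state `some (j, p, b)`, `j` is the stored letter
`β(0)`, `p` says whether `j` is pending in `α(1)α(2)⋯`, and `b` says whether the last letter read
completed a bad `j`-pair. -/
def pairStep : Option (A × Prop × Prop) → A × A → Option (A × Prop × Prop)
  | none, (_, j) => some (j, False, False)
  | some (j, p, _), (a, _) => some (j, a = j ∨ p ∧ a ≤ j, a = j ∧ p)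

variable (A) in
/-- The deterministic automaton that recognizes `Lbad n` for `A = Fin n`, with `4 * n + 1` states.
The two bits of a state are elements of the two-element type `Prop`. -/
def pairAutomaton : NA (Option (A × Prop × Prop)) (A × A) where
  init := none
  trans q x := {pairStep q x}
  accept := {q | ∃ j p, q = some (j, p, True)}
  complete _ _ := Set.singleton_nonempty _

/-- The run of `pairAutomaton A` on `x`. -/
def pairRun (x : ℕ → A × A) : ℕ → Option (A × Prop × Prop)
  | 0 => none
  | 1 => some ((x 0).2, False, False)
  | k + 2 => some ((x 0).2, IsPending (fun l => (x (l + 1)).1) (x 0).2 (k + 1),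
      (x (k + 1)).1 = (x 0).2 ∧ IsPending (fun l => (x (l + 1)).1) (x 0).2 k)

theorem pairRun_succ (x : ℕ → A × A) : ∀ k, pairRun x (k + 1) = pairStep (pairRun x k) (x k)
  | 0 => rfl
  | 1 => by simp [pairRun, pairStep, isPending_succ, not_isPending_zero]
  | k + 2 => by simp [pairRun, pairStep, isPending_succ (k := k + 1)]

theorem isRun_pairAutomaton_iff {x : ℕ → A × A} {ρ : ℕ → Option (A × Prop × Prop)} :
    (pairAutomaton A).IsRun x ρ ↔ ρ = pairRun x := by
  constructor
  · rintro ⟨hinit, hstep⟩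
    funext k
    induction k with
    | zero => exact hinit
    | succ k ih => rw [pairRun_succ, ← ih]; exact hstep k
  · rintro rfl
    exact ⟨rfl, pairRun_succ x⟩

theorem mem_Lexists_pairAutomaton {x : ℕ → A × A} :
    x ∈ (pairAutomaton A).Lexists ↔ ∃ k, (x (k + 1)).1 = (x 0).2 ∧
      IsPending (fun l => (x (l + 1)).1) (x 0).2 k := by
  have hiff : x ∈ (pairAutomaton A).Lexists ↔ ∃ k, pairRun x k ∈ (pairAutomaton A).accept := by
    simp [NA.Lexists, isRun_pairAutomaton_iff]
  rw [hiff]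
  constructor
  · rintro ⟨_ | _ | k, j, p, hk⟩
    · simp [pairRun] at hk
    · simp [pairRun] at hk
    · simp only [pairRun, Option.some.injEq, Prod.mk.injEq, eq_iff_iff, iff_true] at hk
      exact ⟨k, hk.2.2⟩
  · rintro ⟨k, hk⟩
    exact ⟨k + 2, _, _, by rw [pairRun, eq_true hk]⟩

theorem Lexists_pairAutomaton_fin (n : ℕ) : (pairAutomaton (Fin n)).Lexists = Lbad n :=
  Set.ext fun _ => mem_Lexists_pairAutomaton.trans hasBadPairOmega_iff.symm

end Automaton

theorem stmt4_general :
    ∃ c : ℕ, ∀ n : ℕ, 1 < n →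
      (∃ (Q : Type) (_ : Fintype Q) (M : NA Q (Fin n × Fin n)),
          M.Deterministic ∧ Fintype.card Q ≤ c * n ∧ M.Lexists = Lbad n) ∧
      (∀ f : ℕ → ℕ, IsDelay f → 2 ^ n < f 0 → WinsO f (Lbad n)) ∧
      (∀ f : ℕ → ℕ, IsDelay f → f 0 ≤ 2 ^ n → WinsI f (Lbad n)) := by
  refine ⟨5, fun n hn => ⟨?_, fun f _ hf => ?_, fun f hdelay hf => winsI_Lbad hn hdelay hf⟩⟩
  · have hcard : Fintype.card (Option (Fin n × Prop × Prop)) = 4 * n + 1 := by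
      simp [mul_comm]
    exact ⟨_, inferInstance, pairAutomaton (Fin n), fun _ _ => ⟨_, rfl⟩, by omega,
      Lexists_pairAutomaton_fin n⟩
  · have : NeZero n := ⟨by omega⟩
    exact winsO_Lbad hf

/-- the languages `L_n` are recognized by deterministic
reachability automata of size `O(n)`, Player O wins `Γ_f(L_n)` for every
constant delay function with `f(0) > 2^n`, and Player I wins `Γ_f(L_n)` for
every delay function with `f(0) ≤ 2^n`. -/
theorem stmt4 :
    ∃ c : ℕ, ∀ n : ℕ, 1 < n →
      (∃ (Q : Type) (_ : Fintype Q) (M : NA Q (Fin n × Fin n)),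
          M.Deterministic ∧ Fintype.card Q ≤ c * n ∧ M.Lexists = Lbad n) ∧
      (∀ f : ℕ → ℕ, IsDelay f → IsConstant f → 2 ^ n < f 0 → WinsO f (Lbad n)) ∧
      (∀ f : ℕ → ℕ, IsDelay f → f 0 ≤ 2 ^ n → WinsI f (Lbad n)) := by
  obtain ⟨c, h⟩ := stmt4_general
  exact ⟨c, fun n hn => ⟨(h n hn).1, fun f hf _ => (h n hn).2.1 f hf, (h n hn).2.2⟩⟩

end DelayGames
end

section
/- Let K ⊆ Σ^* be recognized by a nondeterministic finite automaton with m states over a nonempty finite alphabet Σ, and suppose K is suffix-closed (w ∈ K implies ww' ∈ K for every w' ∈ Σ^*). If every ω-word over Σ has a finite prefix in K, then every word w ∈ Σ^* with |w| ≥ 2^m belongs to K. -/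
namespace DelayGames

theorem pre_get_eq_take {A : Type*} (α : Stream' A) (n : ℕ) : pre α.get n = α.take n := by
  induction n with
  | zero => rfl
  | succ n ih =>
    rw [Stream'.take_succ', ← ih, pre, List.range_succ, List.map_append, List.map_singleton, pre]

section DFA

variable {A σ : Type*} (D : DFA A σ)

theorem exists_prefix_evalFrom_eq_evalFrom_take_cycle {q : σ} {b : List A} (hb : b ≠ [])
    (hq : D.evalFrom q b = q) (n : ℕ) :
    ∃ u, u <+: b ∧ D.evalFrom q u = D.evalFrom q ((Stream'.cycle b hb).take n) := by
  induction n using Nat.strong_induction_on with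
  | _ n ih =>
    rw [Stream'.cycle_eq]
    rcases le_total n b.length with hn | hn
    · exact ⟨b.take n, b.take_prefix n, by rw [Stream'.take_append_of_le_length n b _ hn]⟩
    · obtain ⟨k, rfl⟩ := Nat.exists_eq_add_of_le hn
      have hk : k < b.length + k := Nat.lt_add_of_pos_left (List.length_pos_of_ne_nil hb)
      rw [← Stream'.append_take, D.evalFrom_of_append, hq]
      exact ih k hk

theorem exists_prefix_evalFrom_eq_evalFrom_take_lasso {s : σ} {a b : List A} (hb : b ≠ [])
    (hab : D.evalFrom (D.evalFrom s a) b = D.evalFrom s a) (n : ℕ) :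
    ∃ u, u <+: a ++ b ∧ D.evalFrom s u = D.evalFrom s ((a ++ₛ Stream'.cycle b hb).take n) := by
  rcases le_total n a.length with hn | hn
  · exact ⟨a.take n, (a.take_prefix n).trans (a.prefix_append b), by
      rw [Stream'.take_append_of_le_length n a _ hn]⟩
  · obtain ⟨k, rfl⟩ := Nat.exists_eq_add_of_le hn
    obtain ⟨u, hub, hu⟩ := exists_prefix_evalFrom_eq_evalFrom_take_cycle D hb hab k
    refine ⟨a ++ u, (List.prefix_append_right_inj a).2 hub, ?_⟩
    rw [← Stream'.append_take, D.evalFrom_of_append, D.evalFrom_of_append, hu]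

theorem exists_prefix_mem_accepts_of_card_le_length [Fintype σ]
    (hD : ∀ α : ℕ → A, ∃ n, pre α n ∈ D.accepts) {w : List A}
    (hw : Fintype.card σ ≤ w.length) : ∃ u ∈ D.accepts, u <+: w := by
  obtain ⟨_, a, b, c, rfl, -, hb, rfl, hab, -⟩ := D.evalFrom_split (s := D.start) hw rfl
  obtain ⟨n, hn⟩ := hD (a ++ₛ Stream'.cycle b hb).get
  obtain ⟨u, hu, heval⟩ := exists_prefix_evalFrom_eq_evalFrom_take_lasso D hb hab n
  refine ⟨u, ?_, hu.trans (List.prefix_append _ c)⟩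
  rwa [D.mem_accepts, DFA.eval, heval, ← pre_get_eq_take]

end DFA

/-- The automaton `M` as a Mathlib `NFA`, which makes Mathlib's subset construction available. -/
def NA.toNFA {Q A : Type*} (M : NA Q A) : NFA A Q where
  step := M.trans
  start := {M.init}
  accept := M.accept

theorem NA.mem_accepts_toNFA {Q A : Type*} (M : NA Q A) {w : List A} :
    w ∈ M.toNFA.accepts ↔ w ∈ M.Lstar :=
  exists_congr fun _ => and_comm

theorem stmt7_general {Q A : Type*} [Fintype Q] (N : NFA A Q)
    (hN : ∀ α : ℕ → A, ∃ k, pre α k ∈ N.accepts) {w : List A}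
    (hw : 2 ^ Fintype.card Q ≤ w.length) : ∃ u ∈ N.accepts, u <+: w := by
  simp only [← N.toDFA_correct] at hN ⊢
  exact exists_prefix_mem_accepts_of_card_le_length N.toDFA hN (Fintype.card_set.trans_le hw)

/-- if `K` is recognized by an NFA with `m` states, is
suffix-closed, and every ω-word has a finite prefix in `K`, then every finite
word of length at least `2^m` belongs to `K`. -/
theorem stmt7 {Q A : Type*} [Fintype Q] [Fintype A] [Nonempty A] (M : NA Q A)
    (K : Set (List A)) (hK : K = M.Lstar)
    (hsuffix : ∀ w ∈ K, ∀ w' : List A, w ++ w' ∈ K)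
    (huniv : ∀ α : ℕ → A, ∃ k, pre α k ∈ K) :
    ∀ w : List A, 2 ^ Fintype.card Q ≤ w.length → w ∈ K := by
  simp only [hK, ← M.mem_accepts_toNFA] at hsuffix huniv ⊢
  exact fun w hw => let ⟨u, hu, v, huv⟩ := stmt7_general M.toNFA huniv hw
    huv ▸ hsuffix u hu v

end DelayGames
end

section
/- With the color-tracking construction for a deterministic parity automaton A, let n = |Q_𝒞|: for every nonempty D ⊆ Q_𝒞 and every w ∈ Σ_I^* with |w| ≥ 2^{n²}, there exists r ∈ 𝔉 with dom(r) = D and w ∈ W_r. -/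
/-!
Run the powerset automaton of the projection of `𝒞` from all the states `(q, Ω(q))` in parallel:
this is a deterministic finite automaton over `Σ_I` with `2 ^ (n |Q|)` states, and the state it
reaches on `w` determines `r_w^D` for every `D`. On a word `w` with at least as many letters as the
automaton has states, the run passes through a loop; iterating the loop yields infinitely many words
that lead to the same state as `w`, and all of them are witnesses of `r_w^D`.
-/

namespace DelayGames

section Pumping

variable {α σ : Type*}

lemma flatten_replicate_injective {y : List α} (hy : y ≠ []) :
    Function.Injective fun k : ℕ => (List.replicate k y).flatten := by
  intro k l hkl
  simpa [hy] using congrArg List.length hkl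

lemma infinite_setOf_evalFrom_eq [Finite σ] (A : DFA α σ) (s : σ) {w : List α}
    (hw : Nat.card σ ≤ w.length) : {v | A.evalFrom s v = A.evalFrom s w}.Infinite := by
  have := Fintype.ofFinite σ
  rw [Nat.card_eq_fintype_card] at hw
  obtain ⟨t, x, y, z, rfl, -, hy, hx, hloop, hz⟩ := A.evalFrom_split hw rfl
  refine Set.infinite_of_injective_forall_mem
    (f := fun k : ℕ => x ++ (List.replicate k y).flatten ++ z) ?_ fun k => ?_
  · exact (List.append_left_injective z).comp
      ((List.append_right_injective x).comp (flatten_replicate_injective hy))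
  · have hloops : A.evalFrom t (List.replicate k y).flatten = t :=
      A.evalFrom_of_pow hloop
        (Language.join_mem_kstar fun _ hu => List.eq_of_mem_replicate hu)
    rw [Set.mem_ofPred_eq, A.evalFrom_of_append, A.evalFrom_of_append, hx, hloops, hz]

end Pumping

namespace DPA

variable {Q I O : Type*} (M : DPA Q (I × O))

lemma QCvalid_eq_prod : M.QCvalid = Set.univ ×ˢ Set.range M.color := by
  ext; simp [QCvalid]

lemma finite_QCvalid [Finite Q] : M.QCvalid.Finite := by
  rw [QCvalid_eq_prod]
  exact Set.finite_univ.prod (Set.finite_range M.color)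

lemma ncard_QCvalid [Fintype Q] : M.QCvalid.ncard = Fintype.card Q * M.numColors := by
  rw [QCvalid_eq_prod, Set.ncard_prod, Set.ncard_univ, Nat.card_eq_fintype_card, numColors,
    ← Set.ncard_coe_finset, Finset.coe_image, Finset.coe_univ, Set.image_univ]

lemma card_le_ncard_QCvalid [Finite Q] : Nat.card Q ≤ M.QCvalid.ncard := by
  have := M.finite_QCvalid.to_subtype
  exact Nat.card_le_card_of_injective (fun q => (⟨(q, M.color q), q, rfl⟩ : M.QCvalid))
    fun p q h => congrArg (fun s : M.QCvalid => s.1.1) h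

lemma ncard_QCvalid_mul_card_le [Fintype Q] :
    M.QCvalid.ncard * Nat.card Q ≤ (Fintype.card Q * M.numColors) ^ 2 := by
  rw [← M.ncard_QCvalid, sq]
  exact Nat.mul_le_mul_left _ M.card_le_ncard_QCvalid

lemma transC_mem_QCvalid {s : Q × ℕ} (hs : s ∈ M.QCvalid) (x : I × O) :
    M.transC s x ∈ M.QCvalid :=
  max_rec' (· ∈ Set.range M.color) hs ⟨_, rfl⟩

lemma transP_subset_QCvalid {S : Set (Q × ℕ)} (hS : S ⊆ M.QCvalid) (a : I) :
    M.transP S a ⊆ M.QCvalid :=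
  Set.iUnion₂_subset fun _ hs => Set.iUnion_subset fun b =>
    Set.singleton_subset_iff.2 (M.transC_mem_QCvalid (hS hs) (a, b))

/-- The parallel composition, over all `q`, of the powerset automata of the projection of `𝒞`
started in `{(q, Ω(q))}`. Only its transition structure matters, so no state is accepting. Its
states are families of subsets of `Q_𝒞` rather than of `Q × ℕ`, which makes it finite. -/
def parallelDFA : DFA I (Q → 𝒫 M.QCvalid) where
  step S a q := ⟨M.transP (S q) a, M.transP_subset_QCvalid (S q).2 a⟩
  start q := ⟨{(q, M.color q)}, Set.singleton_subset_iff.2 ⟨q, rfl⟩⟩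
  accept := ∅

lemma coe_eval_parallelDFA (w : List I) (q : Q) :
    (M.parallelDFA.eval w q : Set (Q × ℕ)) = M.transPStar {(q, M.color q)} w :=
  (List.foldl_hom (fun S : Q → 𝒫 M.QCvalid => (S q : Set (Q × ℕ))) fun _ _ => rfl).symm

lemma card_state_parallelDFA [Finite Q] :
    Nat.card (Q → 𝒫 M.QCvalid) = 2 ^ (M.QCvalid.ncard * Nat.card Q) := by
  rw [Nat.card_fun, Nat.card_coe_set_eq, Set.ncard_powerset _ M.finite_QCvalid, pow_mul]

lemma rOf_eq_of_eval_parallelDFA_eq {v w : List I}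
    (h : M.parallelDFA.eval v = M.parallelDFA.eval w) (D : Set (Q × ℕ)) :
    M.rOf D v = M.rOf D w := by
  funext s
  simp only [rOf, ← coe_eval_parallelDFA, h]

lemma rdom_rOf (D : Set (Q × ℕ)) (w : List I) : rdom (M.rOf D w) = D := by
  ext
  simp [rdom, rOf]

lemma mem_witnessSet_rOf {D : Set (Q × ℕ)} {v w : List I} :
    v ∈ M.WitnessSet (M.rOf D w) ↔ M.rOf D w = M.rOf D v := by
  rw [WitnessSet, Set.mem_ofPred_eq, rdom_rOf]

lemma infinite_witnessSet_rOf [Finite Q] (D : Set (Q × ℕ)) {w : List I}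
    (hw : 2 ^ (M.QCvalid.ncard * Nat.card Q) ≤ w.length) :
    (M.WitnessSet (M.rOf D w)).Infinite := by
  have := M.finite_QCvalid.powerset.to_subtype
  rw [← card_state_parallelDFA] at hw
  exact (infinite_setOf_evalFrom_eq M.parallelDFA M.parallelDFA.start hw).mono fun _ hv =>
    M.mem_witnessSet_rOf.2 (M.rOf_eq_of_eval_parallelDFA_eq hv D).symm

end DPA

theorem stmt11_general {Q I O : Type*} [Finite Q] (M : DPA Q (I × O))
    (D : Set (Q × ℕ)) (hD : D.Nonempty)
    (w : List I) (hw : 2 ^ (M.QCvalid.ncard * Nat.card Q) ≤ w.length) :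
    ∃ r ∈ M.Frak, DPA.rdom r = D ∧ w ∈ M.WitnessSet r :=
  ⟨M.rOf D w, ⟨(M.rdom_rOf D w).symm ▸ hD, M.infinite_witnessSet_rOf D hw⟩, M.rdom_rOf D w,
    M.mem_witnessSet_rOf.2 rfl⟩

/-- with `n = |Q_𝒞|`, for every nonempty `D ⊆ Q_𝒞` and every
`w ∈ Σ_I^*` with `|w| ≥ 2^{n²}`, there exists `r ∈ 𝔉` with `dom(r) = D` and
`w ∈ W_r`. -/
theorem stmt11 {Q I O : Type*} [Fintype Q] [Fintype I] [Fintype O]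
    [Nonempty I] [Nonempty O] (M : DPA Q (I × O))
    (D : Set (Q × ℕ)) (hD : D.Nonempty) (hDvalid : D ⊆ M.QCvalid)
    (w : List I) (hw : 2 ^ ((Fintype.card Q * M.numColors) ^ 2) ≤ w.length) :
    ∃ r ∈ M.Frak, DPA.rdom r = D ∧ w ∈ M.WitnessSet r :=
  stmt11_general M D hD w <|
    (Nat.pow_le_pow_right two_pos M.ncard_QCvalid_mul_card_le).trans hw

end DelayGames
end
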